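/- Let Γ be a reduced, non-ascending labeled graph with all labels positive, let e, f be mobile edges of Γ with f ∉ {e, ē}, and let A, A′, B be edge paths none of whose edges lies in {e, ē, f, f̄}. Suppose that in Γ the edge e can slide over the concatenated path A·f·A′ and that afterwards f can slide over B (every single slide valid, every intermediate graph reduced). Then, starting again from Γ, f can slide over B and afterwards e can slide over the concatenated path A·B·f·A′, and the two composite slide sequences produce the same labeled graph. -/

import Mathlib

/-! Labeled graphs in the sense of generalized Baumslag–Solitar theory. -/

structure LGraph (V E : Type) where
  o : E → V
  bar : E → E
  bar_bar : ∀ e, bar (bar e) = e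
  bar_ne : ∀ e, bar e ≠ e
  lab : E → ℤ

namespace LGraph

variable {V E V' E' : Type}

/-- Terminal vertex of an oriented edge. -/
def t (G : LGraph V E) (e : E) : V := G.o (G.bar e)

/-- All labels are positive. -/
def Positive (G : LGraph V E) : Prop := ∀ e : E, 0 < G.lab e

/-- No collapsible edge: every label-1 edge is a loop. -/
def Reduced (G : LGraph V E) : Prop := ∀ e : E, G.lab e = 1 → G.o e = G.t e

/-- An `n`-rose: one vertex and `n` pairs of oriented edges. -/
def IsRose (G : LGraph V E) (n : ℕ) : Prop :=
  Nat.card V = 1 ∧ Nat.card E = 2 * n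

/-- Modulus of a single oriented edge: `λ(ē)/λ(e)`. -/
def qe (G : LGraph V E) (e : E) : ℚ := (G.lab (G.bar e) : ℚ) / (G.lab e : ℚ)

/-- Modulus of an edge path. -/
def q (G : LGraph V E) (l : List E) : ℚ := (l.map G.qe).prod

/-- Consecutive edges match up. -/
def IsEdgePath (G : LGraph V E) (l : List E) : Prop :=
  List.Chain' (fun a b => G.t a = G.o b) l

/-- An `e`-edge path. -/
def IsEEdgePath (G : LGraph V E) (e : E) (l : List E) : Prop :=
  G.IsEdgePath l ∧
  (∀ a ∈ l, a ≠ e ∧ a ≠ G.bar e) ∧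
  (∀ a ∈ l.head?, G.o a = G.o e) ∧
  ∀ i : Fin l.length, ∃ k : ℤ,
    (G.lab e : ℚ) * G.q (l.take i.1) = (k : ℚ) * (G.lab (l.get i) : ℚ)

/-- A monotone cycle `(e₁,…,eₛ,e)`. -/
def IsMonotoneCycle (G : LGraph V E) (l : List E) (e : E) : Prop :=
  G.IsEEdgePath (G.bar e) l ∧
  G.t (l.getLastD e) = G.o e ∧
  ∃ k : ℤ, G.q (l ++ [e]) = (k : ℚ)

/-- A strict monotone cycle. -/
def IsStrictMonotoneCycle (G : LGraph V E) (l : List E) (e : E) : Prop :=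
  G.IsMonotoneCycle l e ∧ G.q (l ++ [e]) ≠ 1

def HasStrictMonotoneCycle (G : LGraph V E) : Prop :=
  ∃ (l : List E) (e : E), G.IsStrictMonotoneCycle l e

/-- A strict `e`-integer cycle. -/
def IsStrictIntegerCycle (G : LGraph V E) (e : E) (l : List E) : Prop :=
  G.IsEEdgePath e l ∧ l ≠ [] ∧
  G.t (l.getLastD e) = G.o (l.headD e) ∧
  (∃ k : ℤ, G.q l = (k : ℚ)) ∧ G.q l ≠ 1

/-- A mobile edge. -/
def Mobile (G : LGraph V E) (e : E) : Prop :=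
  (∃ l, G.IsStrictMonotoneCycle l e ∨ G.IsStrictMonotoneCycle l (G.bar e)) ∨
  (∃ l, G.IsStrictIntegerCycle e l ∨ G.IsStrictIntegerCycle (G.bar e) l)

/-- The single slide of `e` over `f` is permitted. -/
def CanSlide (G : LGraph V E) (e f : E) : Prop :=
  f ≠ e ∧ f ≠ G.bar e ∧ G.o f = G.o e ∧ G.lab f ∣ G.lab e

open Classical in
/-- The result of the single slide of `e` over `f`. -/
noncomputable def slide (G : LGraph V E) (e f : E) : LGraph V E where
  o := fun x => if x = e then G.t f else G.o x
  bar := G.bar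
  bar_bar := G.bar_bar
  bar_ne := G.bar_ne
  lab := fun x => if x = e then G.lab e * G.lab (G.bar f) / G.lab f else G.lab x

/-- Successively slide `e` over the edges of a path. -/
noncomputable def slidePath : LGraph V E → E → List E → LGraph V E
  | G, _, [] => G
  | G, e, f :: l => slidePath (G.slide e f) e l

/-- Each single slide in the successive slide of `e` over a path is permitted. -/
def CanSlidePath : LGraph V E → E → List E → Prop
  | _, _, [] => True
  | G, e, f :: l => G.CanSlide e f ∧ CanSlidePath (G.slide e f) e l

/-- Each single slide is permitted and each intermediate graph is reduced. -/
def GoodSlidePath : LGraph V E → E → List E → Prop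
  | _, _, [] => True
  | G, e, f :: l => G.CanSlide e f ∧ (G.slide e f).Reduced ∧ GoodSlidePath (G.slide e f) e l

/-- Perform a finite sequence of single slides, given as pairs (slid edge, edge slid over). -/
noncomputable def slideSeq : LGraph V E → List (E × E) → LGraph V E
  | G, [] => G
  | G, p :: rest => slideSeq (G.slide p.1 p.2) rest

/-- A sequence of permitted single slides, each sliding a mobile edge. -/
def MobileSlideSeq : LGraph V E → List (E × E) → Prop
  | _, [] => True
  | G, p :: rest => G.Mobile p.1 ∧ G.CanSlide p.1 p.2 ∧ MobileSlideSeq (G.slide p.1 p.2) rest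

/-- Isomorphism of labeled graphs. -/
def Isom (G : LGraph V E) (G' : LGraph V' E') : Prop :=
  ∃ (φ : V → V') (Φ : E → E'),
    Function.Bijective φ ∧ Function.Bijective Φ ∧
    (∀ x, G'.o (Φ x) = φ (G.o x)) ∧
    (∀ x, G'.bar (Φ x) = Φ (G.bar x)) ∧
    (∀ x, G'.lab (Φ x) = G.lab x)

open Classical in
/-- The result of the induction move at the loop `e` with multiplier `m`. -/
noncomputable def inductionMove (G : LGraph V E) (e : E) (m : ℤ) : LGraph V E where
  o := G.o
  bar := G.bar
  bar_bar := G.bar_bar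
  bar_ne := G.bar_ne
  lab := fun x => if x ≠ e ∧ x ≠ G.bar e ∧ G.o x = G.o e then m * G.lab x else G.lab x

/-- `G'` is obtained from `G` by a single slide move (up to isomorphism). -/
def IsSlideMove (G : LGraph V E) (G' : LGraph V' E') : Prop :=
  ∃ e f, G.CanSlide e f ∧ Isom G' (G.slide e f)

/-- `G'` is obtained from `G` by a (forward) induction move. -/
def IsInductionMove (G : LGraph V E) (G' : LGraph V' E') : Prop :=
  ∃ (e : E) (m : ℤ), G.o e = G.t e ∧ G.lab e = 1 ∧ 1 ≤ m ∧ m ∣ G.lab (G.bar e) ∧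
    Isom G' (G.inductionMove e m)

/-- `G'` is obtained from `G` by an A-move. -/
def IsAMove (G : LGraph V E) (G' : LGraph V' E') : Prop :=
  ∃ (e d : E) (e' : E') (φ : V → V') (Φ : E → E'),
    G.o e = G.t e ∧ G.lab e = 1 ∧ G.lab (G.bar e) ≠ 1 ∧
    G.o d = G.o e ∧ G.t d ≠ G.o e ∧
    G.lab d ≠ 1 ∧ G.lab (G.bar d) ≠ 1 ∧ G.lab d ∣ G.lab (G.bar e) ∧
    (∀ x : E, G.o x = G.o e → x = e ∨ x = G.bar e ∨ x = d) ∧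
    G'.o e' = φ (G.t d) ∧ G'.t e' = φ (G.t d) ∧
    G'.lab e' = G.lab (G.bar d) ∧
    G'.lab (G'.bar e') = G.lab (G.bar d) * G.lab (G.bar e) ∧
    (∀ w₁ w₂ : V, w₁ ≠ G.o e → w₂ ≠ G.o e → φ w₁ = φ w₂ → w₁ = w₂) ∧
    (∀ v' : V', ∃ w : V, w ≠ G.o e ∧ φ w = v') ∧
    (∀ x : E, x ≠ e → x ≠ G.bar e → x ≠ d → x ≠ G.bar d →
      Φ x ≠ e' ∧ Φ x ≠ G'.bar e' ∧
      G'.o (Φ x) = φ (G.o x) ∧ G'.bar (Φ x) = Φ (G.bar x) ∧ G'.lab (Φ x) = G.lab x) ∧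
    (∀ x y : E, x ≠ e → x ≠ G.bar e → x ≠ d → x ≠ G.bar d →
      y ≠ e → y ≠ G.bar e → y ≠ d → y ≠ G.bar d → Φ x = Φ y → x = y) ∧
    (∀ y : E', y ≠ e' → y ≠ G'.bar e' →
      ∃ x : E, x ≠ e ∧ x ≠ G.bar e ∧ x ≠ d ∧ x ≠ G.bar d ∧ Φ x = y)

/-- A strict ascending loop: a loop with `λ(e) = 1 ≠ λ(ē)`. -/
def HasStrictAscendingLoop (G : LGraph V E) : Prop :=
  ∃ e : E, G.o e = G.t e ∧ G.lab e = 1 ∧ G.lab (G.bar e) ≠ 1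

end LGraph

/-- A labeled graph with its vertex and edge types bundled. -/
structure BGraph where
  V : Type
  E : Type
  G : LGraph V E

/-- An elementary deformation move: a slide, an induction move or its inverse,
or an A-move or its inverse. -/
def BGraph.ElemMove (X Y : BGraph) : Prop :=
  LGraph.IsSlideMove X.G Y.G ∨ LGraph.IsInductionMove X.G Y.G ∨
  LGraph.IsInductionMove Y.G X.G ∨ LGraph.IsAMove X.G Y.G ∨ LGraph.IsAMove Y.G X.G

/-- A finite sequence of elementary moves with all intermediate graphs reduced. -/
def BGraph.MoveSeq : BGraph → BGraph → Prop :=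
  Relation.ReflTransGen (fun X Y => X.ElemMove Y ∧ Y.G.Reduced)

/-- A reduced labeled graph is non-ascending if no reduced labeled graph obtained from it
by slide, induction and A-moves (all intermediate graphs reduced) contains a
strict ascending loop. -/
def LGraph.NonAscending {V E : Type} (G : LGraph V E) : Prop :=
  ∀ Y : BGraph, BGraph.MoveSeq ⟨V, E, G⟩ Y → ¬ Y.G.HasStrictAscendingLoop

/-! Sliding `e` changes nothing but the origin and the label of `e`, so slides of different edges
commute as long as neither edge is slid over the other. The only interaction is when `e` slides
over `f`: if `f` first slides over `b`, then `λ(b) ∣ λ(f) ∣ λ(e)` lets `e` follow `f` over `b`.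
Both labels are multiplied by `λ(b̄)/λ(b)`, so the ratio `λ(e)/λ(f)` is preserved and `e` can still
slide over `f`; it arrives at the terminus of `f` with the same label as if it had slid over `f`
at the start. -/

namespace LGraph

attribute [ext] LGraph

open Classical in
/-- The labeled graph obtained from `G` by moving the origin of the oriented edge `e` to `v` and
changing its label to `n`. Every slide of `e`, whatever the edge slid over, has this form. -/
noncomputable def reattach {V E : Type} (G : LGraph V E) (e : E) (v : V) (n : ℤ) :
    LGraph V E where
  o := Function.update G.o e v
  bar := G.bar
  bar_bar := G.bar_bar
  bar_ne := G.bar_ne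
  lab := Function.update G.lab e n

variable {V E : Type} {G : LGraph V E} {e f a b x : E} {v w : V} {m n k : ℤ} {A B : List E}

theorem bar_eq_iff : G.bar a = e ↔ a = G.bar e :=
  ⟨fun h => by rw [← h, G.bar_bar], fun h => by rw [h, G.bar_bar]⟩

theorem bar_reattach : (G.reattach e v n).bar = G.bar := rfl

theorem o_reattach_of_ne (hx : x ≠ e) : (G.reattach e v n).o x = G.o x := by
  simp [reattach, hx]

theorem lab_reattach_self : (G.reattach e v n).lab e = n := by
  simp [reattach]

theorem lab_reattach_of_ne (hx : x ≠ e) : (G.reattach e v n).lab x = G.lab x := by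
  simp [reattach, hx]

theorem t_reattach (hx : x ≠ G.bar e) : (G.reattach e v n).t x = G.t x :=
  o_reattach_of_ne (bar_eq_iff.not.2 hx)

theorem lab_bar_reattach (hx : x ≠ G.bar e) :
    (G.reattach e v n).lab (G.bar x) = G.lab (G.bar x) :=
  lab_reattach_of_ne (bar_eq_iff.not.2 hx)

theorem reattach_reattach : (G.reattach e v n).reattach e w m = G.reattach e w m := by
  ext <;> simp [reattach]

open Classical in
theorem reattach_comm (hfe : f ≠ e) :
    (G.reattach e v n).reattach f w m = (G.reattach f w m).reattach e v n := by
  ext <;> simp [reattach, Function.update_comm hfe]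

theorem slide_eq_reattach (G : LGraph V E) (e a : E) :
    G.slide e a = G.reattach e (G.t a) (G.lab e * G.lab (G.bar a) / G.lab a) := by
  ext <;> simp [slide, reattach, Function.update_apply]

theorem reattach_slide : (G.slide e a).reattach e v n = G.reattach e v n := by
  rw [slide_eq_reattach, reattach_reattach]

theorem slide_eq_reattach_of_lab_eq (ha : G.lab a ≠ 0) (h : G.lab e = G.lab a * k) :
    G.slide e a = G.reattach e (G.t a) (k * G.lab (G.bar a)) := by
  rw [slide_eq_reattach, h, mul_assoc, Int.mul_ediv_cancel_left _ ha]

theorem bar_slide : (G.slide e a).bar = G.bar := rfl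

theorem o_slide_self : (G.slide e a).o e = G.t a := if_pos rfl

theorem o_slide_of_ne (hx : x ≠ e) : (G.slide e a).o x = G.o x := if_neg hx

theorem t_slide (hx : x ≠ G.bar e) : (G.slide e a).t x = G.t x := by
  rw [slide_eq_reattach, t_reattach hx]

theorem lab_slide_of_ne (hx : x ≠ e) : (G.slide e a).lab x = G.lab x := if_neg hx

theorem lab_bar_slide (hx : x ≠ G.bar e) :
    (G.slide e a).lab (G.bar x) = G.lab (G.bar x) :=
  lab_slide_of_ne (bar_eq_iff.not.2 hx)

theorem lab_slide_self (ha : G.lab a ≠ 0) (h : G.lab e = G.lab a * k) :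
    (G.slide e a).lab e = k * G.lab (G.bar a) := by
  rw [slide_eq_reattach_of_lab_eq ha h, lab_reattach_self]

theorem slide_reattach (hfe : f ≠ e) (hbe : b ≠ e) (hbe' : b ≠ G.bar e) :
    (G.reattach e v n).slide f b = (G.slide f b).reattach e v n := by
  rw [slide_eq_reattach, slide_eq_reattach, reattach_comm hfe, t_reattach hbe', bar_reattach,
    lab_bar_reattach hbe', lab_reattach_of_ne hfe, lab_reattach_of_ne hbe]

theorem canSlide_reattach_iff (hfe : f ≠ e) (hbe : b ≠ e) :
    (G.reattach e v n).CanSlide f b ↔ G.CanSlide f b := by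
  rw [CanSlide, CanSlide, bar_reattach, o_reattach_of_ne hfe, o_reattach_of_ne hbe,
    lab_reattach_of_ne hfe, lab_reattach_of_ne hbe]

theorem canSlide_slide_iff (hfe : f ≠ e) (hbe : b ≠ e) :
    (G.slide e a).CanSlide f b ↔ G.CanSlide f b := by
  rw [slide_eq_reattach, canSlide_reattach_iff hfe hbe]

theorem slide_comm (hfe : f ≠ e) (haf : a ≠ f) (haf' : a ≠ G.bar f) (hbe : b ≠ e)
    (hbe' : b ≠ G.bar e) : (G.slide e a).slide f b = (G.slide f b).slide e a := by
  rw [slide_eq_reattach G e, slide_reattach hfe hbe hbe', slide_eq_reattach _ e, t_slide haf',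
    bar_slide, lab_bar_slide haf', lab_slide_of_ne hfe.symm, lab_slide_of_ne haf]

theorem canSlidePath_reattach_iff (hfe : f ≠ e) (hB : ∀ x ∈ B, x ≠ e ∧ x ≠ G.bar e) :
    (G.reattach e v n).CanSlidePath f B ↔ G.CanSlidePath f B := by
  induction B generalizing G with
  | nil => rfl
  | cons b B ih =>
    obtain ⟨⟨hbe, hbe'⟩, hB⟩ := List.forall_mem_cons.1 hB
    rw [CanSlidePath, CanSlidePath, slide_reattach hfe hbe hbe', canSlide_reattach_iff hfe hbe,
      ih (G := G.slide f b) hB]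

theorem canSlidePath_slide_iff (hfe : f ≠ e) (hB : ∀ x ∈ B, x ≠ e ∧ x ≠ G.bar e) :
    (G.slide e a).CanSlidePath f B ↔ G.CanSlidePath f B := by
  rw [slide_eq_reattach, canSlidePath_reattach_iff hfe hB]

theorem exists_slidePath_eq_reattach (G : LGraph V E) (e : E) (A : List E) :
    ∃ v n, G.slidePath e A = G.reattach e v n := by
  induction A generalizing G with
  | nil => exact ⟨G.o e, G.lab e, by ext <;> simp [slidePath, reattach]⟩
  | cons a A ih =>
    obtain ⟨v, n, h⟩ := ih (G.slide e a)
    exact ⟨v, n, by rw [slidePath, h, reattach_slide]⟩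

theorem bar_slidePath (G : LGraph V E) (e : E) (A : List E) :
    (G.slidePath e A).bar = G.bar := by
  obtain ⟨v, n, h⟩ := exists_slidePath_eq_reattach G e A
  rw [h, bar_reattach]

theorem canSlide_slidePath_iff (hfe : f ≠ e) (hbe : b ≠ e) :
    (G.slidePath e A).CanSlide f b ↔ G.CanSlide f b := by
  obtain ⟨v, n, h⟩ := exists_slidePath_eq_reattach G e A
  rw [h, canSlide_reattach_iff hfe hbe]

theorem canSlidePath_slidePath_iff (hfe : f ≠ e) (hB : ∀ x ∈ B, x ≠ e ∧ x ≠ G.bar e) :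
    (G.slidePath e A).CanSlidePath f B ↔ G.CanSlidePath f B := by
  obtain ⟨v, n, h⟩ := exists_slidePath_eq_reattach G e A
  rw [h, canSlidePath_reattach_iff hfe hB]

theorem slidePath_slide_comm (hfe : f ≠ e) (haf : a ≠ f) (haf' : a ≠ G.bar f)
    (hB : ∀ x ∈ B, x ≠ e ∧ x ≠ G.bar e) :
    (G.slide e a).slidePath f B = (G.slidePath f B).slide e a := by
  induction B generalizing G with
  | nil => rfl
  | cons b B ih =>
    obtain ⟨⟨hbe, hbe'⟩, hB⟩ := List.forall_mem_cons.1 hB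
    rw [slidePath, slide_comm hfe haf haf' hbe hbe', ih (G := G.slide f b) haf' hB, slidePath]

theorem slidePath_comm (hfe : f ≠ e) (hA : ∀ x ∈ A, x ≠ f ∧ x ≠ G.bar f)
    (hB : ∀ x ∈ B, x ≠ e ∧ x ≠ G.bar e) :
    (G.slidePath e A).slidePath f B = (G.slidePath f B).slidePath e A := by
  induction A generalizing G with
  | nil => rfl
  | cons a A ih =>
    obtain ⟨⟨haf, haf'⟩, hA⟩ := List.forall_mem_cons.1 hA
    rw [slidePath, ih (G := G.slide e a) hA hB, slidePath_slide_comm hfe haf haf' hB, slidePath]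

theorem slidePath_append :
    G.slidePath e (A ++ B) = (G.slidePath e A).slidePath e B := by
  induction A generalizing G with
  | nil => rfl
  | cons _ _ ih => exact ih

theorem canSlidePath_append :
    G.CanSlidePath e (A ++ B) ↔ G.CanSlidePath e A ∧ (G.slidePath e A).CanSlidePath e B := by
  induction A generalizing G with
  | nil => simp only [List.nil_append, CanSlidePath, slidePath, true_and]
  | cons a A ih => simp only [List.cons_append, CanSlidePath, slidePath, ih, and_assoc]

theorem GoodSlidePath.canSlidePath (h : G.GoodSlidePath e A) : G.CanSlidePath e A := by
  induction A generalizing G with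
  | nil => trivial
  | cons a A ih => exact ⟨h.1, ih h.2.2⟩

theorem lab_slide_ne_zero (h0 : ∀ x, G.lab x ≠ 0) (ha : G.CanSlide e a) (x : E) :
    (G.slide e a).lab x ≠ 0 := by
  obtain ⟨k, hk⟩ := ha.2.2.2
  have hk0 : k ≠ 0 := right_ne_zero_of_mul (hk ▸ h0 e)
  rcases eq_or_ne x e with rfl | hx
  · rw [lab_slide_self (h0 a) hk]
    exact mul_ne_zero hk0 (h0 _)
  · rw [lab_slide_of_ne hx]
    exact h0 x

theorem lab_slidePath_ne_zero (h0 : ∀ x, G.lab x ≠ 0) (hA : G.CanSlidePath e A) (x : E) :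
    (G.slidePath e A).lab x ≠ 0 := by
  induction A generalizing G with
  | nil => exact h0 x
  | cons a A ih => exact ih (lab_slide_ne_zero h0 hA.1) hA.2

theorem CanSlide.trans (hf : G.CanSlide e f) (hb : G.CanSlide f b) (hbe : b ≠ e)
    (hbe' : b ≠ G.bar e) : G.CanSlide e b :=
  ⟨hbe, hbe', hb.2.2.1.trans hf.2.2.1, hb.2.2.2.trans hf.2.2.2⟩

theorem lab_slide_slide_eq_mul (hb0 : G.lab b ≠ 0) (hb : G.CanSlide f b) (hfe : f ≠ e)
    (hk : G.lab e = G.lab f * k) :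
    ((G.slide f b).slide e b).lab e = ((G.slide f b).slide e b).lab f * k := by
  obtain ⟨hbf, hbf', -, m, hm⟩ := hb
  have hb0' : (G.slide f b).lab b ≠ 0 := by rwa [lab_slide_of_ne hbf]
  have he : (G.slide f b).lab e = (G.slide f b).lab b * (m * k) := by
    rw [lab_slide_of_ne hfe.symm, lab_slide_of_ne hbf, hk, hm, mul_assoc]
  calc ((G.slide f b).slide e b).lab e
    _ = m * k * (G.slide f b).lab (G.bar b) := lab_slide_self hb0' he
    _ = m * G.lab (G.bar b) * k := by rw [lab_bar_slide hbf', mul_right_comm]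
    _ = ((G.slide f b).slide e b).lab f * k := by
      rw [lab_slide_of_ne hfe, lab_slide_self hb0 hm]

theorem CanSlide.slide_slide (hb0 : G.lab b ≠ 0) (hf : G.CanSlide e f) (hb : G.CanSlide f b) :
    ((G.slide f b).slide e b).CanSlide e f := by
  obtain ⟨hfe, hfe', -, k, hk⟩ := hf
  refine ⟨hfe, hfe', ?_, k, lab_slide_slide_eq_mul hb0 hb hfe hk⟩
  rw [o_slide_self, o_slide_of_ne hfe, o_slide_self, t_slide hb.2.1]

theorem slide_slide_slide (h0 : ∀ x, G.lab x ≠ 0) (hf : G.CanSlide e f) (hb : G.CanSlide f b)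
    (hbe : b ≠ e) (hbe' : b ≠ G.bar e) :
    ((G.slide f b).slide e b).slide e f = (G.slide e f).slide f b := by
  obtain ⟨hfe, hfe', -, k, hk⟩ := hf
  have hf0 : ((G.slide f b).slide e b).lab f ≠ 0 := by
    rw [lab_slide_of_ne hfe]
    exact lab_slide_ne_zero h0 hb f
  have ht : ((G.slide f b).slide e b).t f = G.t f := by
    rw [t_slide (G := G.slide f b) hfe', t_slide (G.bar_ne f).symm]
  have hlab : ((G.slide f b).slide e b).lab (G.bar f) = G.lab (G.bar f) := by
    rw [lab_slide_of_ne (bar_eq_iff.not.2 hfe'), lab_slide_of_ne (G.bar_ne f)]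
  calc ((G.slide f b).slide e b).slide e f
    _ = ((G.slide f b).slide e b).reattach e (G.t f) (k * G.lab (G.bar f)) := by
      rw [slide_eq_reattach_of_lab_eq hf0 (lab_slide_slide_eq_mul (h0 b) hb hfe hk), ht, bar_slide,
        bar_slide, hlab]
    _ = (G.slide f b).reattach e (G.t f) (k * G.lab (G.bar f)) := reattach_slide
    _ = (G.reattach e (G.t f) (k * G.lab (G.bar f))).slide f b :=
      (slide_reattach hfe hbe hbe').symm
    _ = (G.slide e f).slide f b := by rw [slide_eq_reattach_of_lab_eq (h0 f) hk]

theorem CanSlide.slidePath_concat (h0 : ∀ x, G.lab x ≠ 0) (hf : G.CanSlide e f)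
    (hB : G.CanSlidePath f B) (hBe : ∀ x ∈ B, x ≠ e ∧ x ≠ G.bar e) :
    (G.slidePath f B).CanSlidePath e (B ++ [f]) ∧
      (G.slidePath f B).slidePath e (B ++ [f]) = (G.slide e f).slidePath f B := by
  induction B generalizing G with
  | nil => exact ⟨⟨hf, trivial⟩, rfl⟩
  | cons b B ih =>
    obtain ⟨hb, hB⟩ := hB
    obtain ⟨⟨hbe, hbe'⟩, hBe⟩ := List.forall_mem_cons.1 hBe
    have hfe : f ≠ e := hf.1
    have hbf : b ≠ f := hb.1
    have hbf' : b ≠ G.bar f := hb.2.1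
    have heb : G.CanSlide e b := hf.trans hb hbe hbe'
    have heb' : (G.slide f b).CanSlide e b := (canSlide_slide_iff hfe.symm hbf).2 heb
    have heB : (G.slidePath f (b :: B)).CanSlide e b :=
      (canSlide_slidePath_iff hfe.symm hbf).2 heb
    have hfB : ((G.slide f b).slide e b).CanSlidePath f B :=
      (canSlidePath_slide_iff (G := G.slide f b) hfe hBe).2 hB
    have hcomm : ((G.slide f b).slide e b).slidePath f B =
        ((G.slide f b).slidePath f B).slide e b :=
      slidePath_slide_comm hfe hbf hbf' hBe
    obtain ⟨hcan, heq⟩ := ih (lab_slide_ne_zero (lab_slide_ne_zero h0 hb) heb')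
      (hf.slide_slide (h0 b) hb) hfB hBe
    rw [hcomm] at hcan heq
    rw [slide_slide_slide h0 hf hb hbe hbe'] at heq
    exact ⟨⟨heB, hcan⟩, heq⟩

end LGraph

open LGraph in
theorem stmt13_general {V E : Type} (G : LGraph V E) (h0 : ∀ x, G.lab x ≠ 0) (e f : E)
    (A A' B : List E)
    (hA : ∀ x ∈ A, x ≠ f ∧ x ≠ G.bar f)
    (hA' : ∀ x ∈ A', x ≠ f ∧ x ≠ G.bar f)
    (hB : ∀ x ∈ B, x ≠ e ∧ x ≠ G.bar e)
    (h1 : G.CanSlidePath e (A ++ f :: A'))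
    (h2 : (G.slidePath e (A ++ f :: A')).CanSlidePath f B) :
    G.CanSlidePath f B ∧
      (G.slidePath f B).CanSlidePath e (A ++ B ++ f :: A') ∧
      (G.slidePath e (A ++ f :: A')).slidePath f B
        = (G.slidePath f B).slidePath e (A ++ B ++ f :: A') := by
  obtain ⟨hAe, hf, hA'e⟩ := canSlidePath_append.1 h1
  have hfe : f ≠ e := hf.1
  have hfB : G.CanSlidePath f B := (canSlidePath_slidePath_iff hfe hB).1 h2
  have hbar : (G.slidePath e A).bar = G.bar := bar_slidePath G e A
  have hbar' : ((G.slidePath e A).slide e f).bar = G.bar := bar_slide.trans hbar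
  have hcomm : (G.slidePath e A).slidePath f B = (G.slidePath f B).slidePath e A :=
    slidePath_comm hfe hA hB
  obtain ⟨hcan, heq⟩ := hf.slidePath_concat (lab_slidePath_ne_zero h0 hAe)
    ((canSlidePath_slidePath_iff hfe hB).2 hfB) (by rwa [hbar])
  have hpath : A ++ B ++ f :: A' = A ++ (B ++ [f] ++ A') := by simp
  rw [hpath]
  refine ⟨hfB, ?_, ?_⟩
  · rw [canSlidePath_append, canSlidePath_append, ← hcomm, heq]
    exact ⟨(canSlidePath_slidePath_iff hfe.symm hA).2 hAe, hcan,
      (canSlidePath_slidePath_iff hfe.symm (by rwa [hbar'])).2 hA'e⟩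
  · rw [slidePath_append, slidePath_append, slidePath_append, ← hcomm, heq]
    exact slidePath_comm hfe (by rwa [hbar']) (by rwa [hbar'])

/-- (Lemma 4.4(k)) In a reduced non-ascending positively-labeled graph,
for mobile edges `e, f` with `f ∉ {e, ē}` and paths `A, A', B` avoiding `{e, ē, f, f̄}`:
if `e` can slide over `A·f·A'` and afterwards `f` over `B` (all slides valid, all
intermediate graphs reduced), then `f` can slide over `B` and afterwards `e` over
`A·B·f·A'`, with the same resulting labeled graph. -/
theorem stmt13 {V E : Type} [Finite V] [Finite E] (G : LGraph V E)
    (hpos : G.Positive) (hred : G.Reduced) (hna : G.NonAscending)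
    (e f : E) (hme : G.Mobile e) (hmf : G.Mobile f)
    (hfe : f ≠ e) (hfebar : f ≠ G.bar e)
    (A A' B : List E)
    (hA : ∀ x ∈ A, x ≠ e ∧ x ≠ G.bar e ∧ x ≠ f ∧ x ≠ G.bar f)
    (hA' : ∀ x ∈ A', x ≠ e ∧ x ≠ G.bar e ∧ x ≠ f ∧ x ≠ G.bar f)
    (hB : ∀ x ∈ B, x ≠ e ∧ x ≠ G.bar e ∧ x ≠ f ∧ x ≠ G.bar f)
    (h1 : G.GoodSlidePath e (A ++ f :: A'))
    (h2 : (G.slidePath e (A ++ f :: A')).GoodSlidePath f B) :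
    G.CanSlidePath f B ∧
      (G.slidePath f B).CanSlidePath e (A ++ B ++ f :: A') ∧
      (G.slidePath e (A ++ f :: A')).slidePath f B
        = (G.slidePath f B).slidePath e (A ++ B ++ f :: A') := by
  exact stmt13_general G (fun x => (hpos x).ne') e f A A' B (fun x hx => (hA x hx).2.2)
    (fun x hx => (hA' x hx).2.2) (fun x hx => ⟨(hB x hx).1, (hB x hx).2.1⟩)
    h1.canSlidePath h2.canSlidePath
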